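/- Suppose H : F → ℤ × ℤ is an injection of a set F onto the coset Λ_k = {(d,h) : 2d + h ≡ k (mod 4)}, where the group ℤ × ℤ acts freely and transitively on F via H (i.e., F is an affine space over ℤ² with H equivariant for translations (m,n) ↦ m·(0,4) + n·(-1,2)). Then for k ≢ 2 (mod 4) there is a unique φ ∈ F minimizing 2|d(φ)| + |h(φ)|, while for k ≡ 2 (mod 4) there are exactly four such minimizers. -/

import Mathlib

/-!
If `p = (d, h)` and `n * d + h ≡ c [ZMOD 2 * n]` with `|c| ≤ n`, then `c` has the least absolute
value in its residue class, so `n * |d| + |h| ≥ |n * d + h| ≥ |c|`, with equality at `(0, c)`.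
If `|c| < n`, equality forces `d = 0` and hence `h = c`. If `c = n`, the whole level set
`n * |d| + |h| = n` lies in the coset and consists of `(±1, 0)` and `(0, ±n)`.
The case of framings is `n = 2`.
-/

section Residues

variable {n a c k : ℤ}

lemma eq_of_modEq_of_abs_add_abs_lt (h : a ≡ c [ZMOD n]) (hlt : |a| + |c| < n) : a = c :=
  sub_eq_zero.mp <| Int.eq_zero_of_abs_lt_dvd h.symm.dvd <| (abs_sub a c).trans_lt hlt

lemma abs_le_abs_of_modEq_two_mul (hc : |c| ≤ n) (h : a ≡ c [ZMOD 2 * n]) : |c| ≤ |a| := by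
  by_contra! hlt
  have hac : a = c := eq_of_modEq_of_abs_add_abs_lt h (by linarith)
  exact hlt.ne (congrArg abs hac)

lemma exists_abs_lt_modEq_two_mul (hn : 0 < n) (hk : ¬k ≡ n [ZMOD 2 * n]) :
    ∃ c, |c| < n ∧ k ≡ c [ZMOD 2 * n] := by
  set r := (k + n) % (2 * n)
  have r_nonneg : 0 ≤ r := Int.emod_nonneg _ (by positivity)
  have r_lt : r < 2 * n := Int.emod_lt_of_pos _ (by positivity)
  have hkr : k ≡ r - n [ZMOD 2 * n] := by
    simpa only [add_sub_cancel_right] using ((Int.mod_modEq (k + n) (2 * n)).sub_right n).symm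
  have r_ne : r ≠ 0 := by
    intro hr0
    refine hk (hkr.trans (Int.modEq_iff_dvd.mpr ⟨1, ?_⟩))
    rw [hr0]
    ring
  exact ⟨r - n, abs_lt.mpr ⟨by omega, by omega⟩, hkr⟩

end Residues

lemma exists_finset_card_eq_forall_mem_iff {α β : Type*} {f : α → β} (hf : f.Injective)
    {T : Finset β} (hT : (T : Set β) ⊆ Set.range f) :
    ∃ S : Finset α, S.card = T.card ∧ ∀ a, a ∈ S ↔ f a ∈ T := by
  classical
  refine ⟨T.preimage f hf.injOn, ?_, fun a ↦ Finset.mem_preimage⟩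
  rw [Finset.card_preimage, Finset.filter_true_of_mem fun b hb ↦ hT hb]

/-- The coset `Λ_k` of possible total defects, with the weight `2` and the modulus `4` replaced by
`n` and `2 * n`. -/
def defectCoset (n k : ℤ) : Set (ℤ × ℤ) := {p | n * p.1 + p.2 ≡ k [ZMOD 2 * n]}

/-- The size of a total defect `(d, h)`, which canonical framings minimize. -/
def defectNorm (n : ℤ) (p : ℤ × ℤ) : ℤ := n * |p.1| + |p.2|

/-- The total defects of canonical framings: the elements of `Λ_k` of least size. -/
def canonicalDefects (n k : ℤ) : Set (ℤ × ℤ) :=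
  {p ∈ defectCoset n k | IsMinOn (defectNorm n) (defectCoset n k) p}

/-- The points `(±1, 0)`, `(0, ±n)`: the vertices of the ball of radius `n` for `defectNorm n`. -/
def defectBallVertices (n : ℤ) : Finset (ℤ × ℤ) := {(1, 0), (-1, 0), (0, n), (0, -n)}

section CanonicalDefects

variable {n c k : ℤ} {p : ℤ × ℤ}

lemma canonicalDefects_congr (h : k ≡ c [ZMOD 2 * n]) :
    canonicalDefects n k = canonicalDefects n c := by
  have hcoset : defectCoset n k = defectCoset n c :=
    Set.ext fun _ ↦ ⟨fun hp ↦ hp.trans h, fun hp ↦ hp.trans h.symm⟩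
  rw [canonicalDefects, canonicalDefects, hcoset]

lemma zero_mk_mem_defectCoset (n c : ℤ) : (0, c) ∈ defectCoset n c := by
  simp [defectCoset]

lemma defectNorm_zero_mk (n c : ℤ) : defectNorm n (0, c) = |c| := by
  simp [defectNorm]

lemma abs_le_defectNorm (hc : |c| ≤ n) (hp : p ∈ defectCoset n c) : |c| ≤ defectNorm n p := by
  have hn : 0 ≤ n := (abs_nonneg c).trans hc
  calc
    |c| ≤ |n * p.1 + p.2| := abs_le_abs_of_modEq_two_mul hc hp
    _ ≤ |n * p.1| + |p.2| := abs_add_le _ _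
    _ = defectNorm n p := by rw [abs_mul, abs_of_nonneg hn, defectNorm]

lemma mem_canonicalDefects_iff (hc : |c| ≤ n) :
    p ∈ canonicalDefects n c ↔ p ∈ defectCoset n c ∧ defectNorm n p = |c| := by
  refine and_congr_right fun hp ↦ ⟨fun hmin ↦ ?_, fun hpc q hq ↦ ?_⟩
  · refine le_antisymm ?_ (abs_le_defectNorm hc hp)
    simpa only [defectNorm_zero_mk] using isMinOn_iff.mp hmin _ (zero_mk_mem_defectCoset n c)
  · exact hpc.trans_le (abs_le_defectNorm hc hq)

lemma le_defectNorm_of_fst_ne_zero (hn : 0 ≤ n) (hp : p.1 ≠ 0) : n ≤ defectNorm n p :=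
  calc
    n ≤ n * |p.1| := le_mul_of_one_le_right hn (Int.one_le_abs hp)
    _ ≤ defectNorm n p := le_add_of_nonneg_right (abs_nonneg _)

theorem canonicalDefects_eq_singleton (hc : |c| < n) : canonicalDefects n c = {(0, c)} := by
  ext ⟨d, h⟩
  rw [mem_canonicalDefects_iff hc.le, Set.mem_singleton_iff]
  constructor
  · rintro ⟨hmem, hnorm⟩
    obtain rfl : d = 0 := by
      by_contra hd
      have hle := le_defectNorm_of_fst_ne_zero (p := (d, h)) ((abs_nonneg c).trans hc.le) hd
      exact hc.not_ge (hnorm ▸ hle)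
    rw [defectNorm_zero_mk] at hnorm
    have hmod : h ≡ c [ZMOD 2 * n] := by simpa [defectCoset] using hmem
    rw [eq_of_modEq_of_abs_add_abs_lt hmod (by linarith)]
  · rintro ⟨rfl, rfl⟩
    exact ⟨zero_mk_mem_defectCoset n _, defectNorm_zero_mk n _⟩

lemma card_defectBallVertices (hn : 0 < n) : (defectBallVertices n).card = 4 := by
  have hne : n ≠ -n := by omega
  simp [defectBallVertices, hn.ne', hne]

lemma defectNorm_eq_self_iff (hn : 0 < n) : defectNorm n p = n ↔ p ∈ defectBallVertices n := by
  obtain ⟨d, h⟩ := p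
  simp only [defectBallVertices, Finset.mem_insert, Finset.mem_singleton, Prod.mk.injEq]
  constructor
  · intro hnorm
    have hd : |d| ≤ 1 := by
      have hle : n * |d| ≤ n := (le_add_of_nonneg_right (abs_nonneg h)).trans_eq hnorm
      exact le_of_mul_le_mul_left (by rwa [mul_one]) hn
    obtain rfl | rfl | rfl : d = 0 ∨ d = 1 ∨ d = -1 := by
      have := abs_le.mp hd
      omega
    · have hh : |h| = n := by rwa [defectNorm_zero_mk] at hnorm
      simpa using eq_or_eq_neg_of_abs_eq hh
    · simpa [defectNorm] using hnorm
    · simpa [defectNorm] using hnorm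
  · rintro (⟨rfl, rfl⟩ | ⟨rfl, rfl⟩ | ⟨rfl, rfl⟩ | ⟨rfl, rfl⟩) <;> simp [defectNorm, abs_of_pos hn]

lemma defectBallVertices_subset_defectCoset (n : ℤ) :
    (defectBallVertices n : Set (ℤ × ℤ)) ⊆ defectCoset n n := by
  have hneg : -n ≡ n [ZMOD 2 * n] := Int.modEq_iff_dvd.mpr ⟨1, by ring⟩
  rintro ⟨d, h⟩ hp
  simp only [defectBallVertices, Finset.mem_coe, Finset.mem_insert, Finset.mem_singleton,
    Prod.mk.injEq] at hp
  rcases hp with ⟨rfl, rfl⟩ | ⟨rfl, rfl⟩ | ⟨rfl, rfl⟩ | ⟨rfl, rfl⟩ <;> simp [defectCoset, hneg]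

theorem canonicalDefects_self (hn : 0 < n) : canonicalDefects n n = defectBallVertices n := by
  ext p
  rw [mem_canonicalDefects_iff (abs_of_pos hn).le, abs_of_pos hn, defectNorm_eq_self_iff hn]
  exact and_iff_right_of_imp fun hp ↦ defectBallVertices_subset_defectCoset n hp

lemma mem_canonicalDefects_iff_forall_le {F : Type*} {H : F → ℤ × ℤ}
    (hrange : Set.range H = defectCoset n k) {φ : F} :
    H φ ∈ canonicalDefects n k ↔ ∀ ψ, defectNorm n (H φ) ≤ defectNorm n (H ψ) := by
  rw [canonicalDefects, ← hrange, Set.mem_sep_iff, isMinOn_iff, Set.forall_mem_range]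
  exact and_iff_right (Set.mem_range_self φ)

end CanonicalDefects

theorem canonical_framings_count_general {F : Type*} {n k : ℤ} (hn : 0 < n) {H : F → ℤ × ℤ}
    (hinj : H.Injective) (hrange : Set.range H = defectCoset n k) :
    (¬k ≡ n [ZMOD 2 * n] → ∃! φ, ∀ ψ, defectNorm n (H φ) ≤ defectNorm n (H ψ)) ∧
    (k ≡ n [ZMOD 2 * n] → ∃ S : Finset F, S.card = 4 ∧
      ∀ φ, φ ∈ S ↔ ∀ ψ, defectNorm n (H φ) ≤ defectNorm n (H ψ)) := by
  have canonical_subset : canonicalDefects n k ⊆ Set.range H := hrange ▸ Set.sep_subset _ _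
  simp only [← mem_canonicalDefects_iff_forall_le hrange]
  constructor
  · intro hk
    obtain ⟨c, hc, hkc⟩ := exists_abs_lt_modEq_two_mul hn hk
    rw [canonicalDefects_congr hkc, canonicalDefects_eq_singleton hc] at canonical_subset ⊢
    obtain ⟨φ, hφ⟩ := canonical_subset rfl
    exact ⟨φ, hφ, fun ψ hψ ↦ hinj (hψ.trans hφ.symm)⟩
  · intro hk
    rw [canonicalDefects_congr hk, canonicalDefects_self hn] at canonical_subset ⊢
    exact card_defectBallVertices hn ▸ exists_finset_card_eq_forall_mem_iff hinj canonical_subset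

/-- Let `F` be a set with an injection `H : F → ℤ × ℤ` onto the affine lattice
`Λ_k = {(d,h) : 2d + h ≡ k (mod 4)}` (so that `F` is an affine space over `ℤ²`, with
`H` equivariant for the translations `(m,n) ↦ m·(0,4) + n·(-1,2)`).  Then for
`k ≢ 2 (mod 4)` there is a unique `φ ∈ F` minimizing `2|d(φ)| + |h(φ)|`, while for
`k ≡ 2 (mod 4)` there are exactly four such minimizers. -/
theorem canonical_framings_count (F : Type*) (k : ℤ) (H : F → ℤ × ℤ)
    (hinj : Function.Injective H)
    (hrange : Set.range H = {p : ℤ × ℤ | (2 * p.1 + p.2) % 4 = k % 4})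
    (act : (ℤ × ℤ) → F → F)
    (hact : ∀ (t : ℤ × ℤ) (φ : F),
      H (act t φ) = H φ + t.1 • ((0, 4) : ℤ × ℤ) + t.2 • ((-1, 2) : ℤ × ℤ))
    (hfree : ∀ (t : ℤ × ℤ) (φ : F), act t φ = φ → t = 0)
    (htrans : ∀ φ ψ : F, ∃ t : ℤ × ℤ, act t φ = ψ) :
    (k % 4 ≠ 2 →
      ∃! φ : F, ∀ ψ : F,
        2 * |(H φ).1| + |(H φ).2| ≤ 2 * |(H ψ).1| + |(H ψ).2|) ∧
    (k % 4 = 2 →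
      ∃ S : Finset F, S.card = 4 ∧
        ∀ φ : F, φ ∈ S ↔ ∀ ψ : F,
          2 * |(H φ).1| + |(H φ).2| ≤ 2 * |(H ψ).1| + |(H ψ).2|) := by
  exact canonical_framings_count_general two_pos hinj hrange
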